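/- Let A = (Q, Σ, δ, ρ) be a connected invertible-reversible Mealy automaton with exactly 3 states (#Q = 3). If every element of the group ⟨A⟩ generated by A has finite order, then ⟨A⟩ is finite. (Equivalently: a connected 3-state invertible-reversible Mealy automaton cannot generate an infinite Burnside group.) -/

import Mathlib

/-!
For a letter `i` of the alphabet, `δ` makes the automaton act on the words over `Q`; since
the automaton is reversible, the words of each length are permuted, and `ρ_u` has finite
order, or takes finitely many values, according to how the orbits of words grow. The *label*
of a letter `x` placed after a word `u` is the size of the orbit of `x` under the stabilizer
of `u`, that is, the ratio of the sizes of the orbits of `u x` and `u`. It can only go down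
when `u` is extended to the left.

* **The last transitive level.** If all words of every length formed one orbit, the group
  could not be torsion: when `ρ_g` is trivial, the orbit of `gg` consists of squares, so its
  last letter cannot be moved alone (`label_one_of_torsion`). Let `c` be the largest length
  for which the action on words is transitive. After a word of length `c`, either all labels
  are `1`, in which case the orbits are bounded and the group is finite, or, since `#Q = 3`,
  exactly two of the three letters are *active*: they have label `2` and are exchanged
  by the stabilizer (`twoActive_of_active`).

* **Orbital words.** Words all of whose letters are active are the walks in a graph on the
  windows `Q^c`. If the orbital words of each length formed one orbit, the powers of a closed
  walk would have labels `2` for ever, against torsion again. So from some length on, the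
  labels along orbital words are `1`, the orbits of orbital words are bounded, and orbital
  words realize only finitely many maps `ρ_v` (`finite_reach`).

* **Every word can be made orbital.** By transitivity on `Q^c` and finiteness, a walk can be
  completed to one acting trivially (`exists_walk_inverse`). Call two windows linked if a walk
  acting trivially joins them. If the inactive letter were constant on one class of linked
  windows, it would be constant on each of them, and the words of length `c` readable from the
  windows would cut `Q^c` into parts of size `2 ^ c`, whereas `2 ^ c` does not divide `3 ^ c`
  (`exists_linked_active`). Hence from any window each letter becomes readable after a walk
  acting trivially, so every `ρ_w` is `ρ_v` for an orbital word `v`. There are finitely many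
  of these, and since inverses are positive powers in a torsion group, the group is finite
  (`finite_autGroup`).
-/

namespace MealyFormal

variable {Q X : Type*}

/-- Extended transition function of the dual automaton: the action of a letter
`i ∈ Σ` on words over the stateset `Q`, defined by
`δ_i(ε) = ε` and `δ_i(x w) = δ_i(x) δ_{ρ_x(i)}(w)`. -/
def dExt (δ : X → Q → Q) (ρ : Q → X → X) : X → List Q → List Q
  | _, [] => []
  | i, x :: w => δ i x :: dExt δ ρ (ρ x i) w

/-- The action `δ_s = δ_{s_n} ∘ ⋯ ∘ δ_{s_1}` of a word `s` over `Σ` on words over `Q`. -/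
def dWord (δ : X → Q → Q) (ρ : Q → X → X) : List X → List Q → List Q
  | [], u => u
  | i :: s, u => dWord δ ρ s (dExt δ ρ i u)

/-- Extended production function: the action of a state `x ∈ Q` on words over the
alphabet `Σ`, defined by `ρ_x(ε) = ε` and `ρ_x(i s) = ρ_x(i) ρ_{δ_i(x)}(s)`. -/
def rExt (δ : X → Q → Q) (ρ : Q → X → X) : Q → List X → List X
  | _, [] => []
  | x, i :: s => ρ x i :: rExt δ ρ (δ i x) s

/-- The action `ρ_u = ρ_{x_n} ∘ ⋯ ∘ ρ_{x_1}` of a word `u = x_1⋯x_n` over `Q`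
on words over `Σ`. -/
def rWord (δ : X → Q → Q) (ρ : Q → X → X) : List Q → List X → List X
  | [], s => s
  | x :: u, s => rWord δ ρ u (rExt δ ρ x s)

/-- `v` lies in the orbit of `u` under the action of the dual automaton. -/
def InOrbit (δ : X → Q → Q) (ρ : Q → X → X) (u v : List Q) : Prop :=
  ∃ s : List X, dWord δ ρ s u = v

/-- The orbit (connected component of the corresponding power) of a word over `Q`. -/
def orbit (δ : X → Q → Q) (ρ : Q → X → X) (u : List Q) : Set (List Q) :=
  {v | InOrbit δ ρ u v}

/-- The action of the dual automaton on `Q^n` is transitive, i.e. `A^n` is connected. -/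
def LevelTransitive (δ : X → Q → Q) (ρ : Q → X → X) (n : ℕ) : Prop :=
  ∀ u v : List Q, u.length = n → v.length = n → InOrbit δ ρ u v

/-- The label `ℓ(u x)` of the nonempty word `u x`:
the number of `z ∈ Q` with `u z` in the orbit of `u x`. -/
noncomputable def label (δ : X → Q → Q) (ρ : Q → X → X) (u : List Q) (x : Q) : ℕ :=
  Set.ncard {z : Q | InOrbit δ ρ (u ++ [x]) (u ++ [z])}

/-- Prefix of length `i` of the (infinite) word `w = w_1 w_2 ⋯`. -/
def pref (w : ℕ → Q) (i : ℕ) : List Q := (List.range i).map w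

/-- The `n`-th power `u^n` of a word `u`. -/
def wpow (u : List Q) (n : ℕ) : List Q := (List.replicate n u).flatten

/-- The group generated by the Mealy automaton: the subgroup of permutations of `Σ*`
generated by the production functions `ρ_x`, `x ∈ Q`. -/
def autGroup (δ : X → Q → Q) (ρ : Q → X → X) : Subgroup (Equiv.Perm (List X)) :=
  Subgroup.closure {π : Equiv.Perm (List X) | ∃ q : Q, ⇑π = rExt δ ρ q}

/-- The semigroup of maps `Σ* → Σ*` generated under composition by the `ρ_x`, `x ∈ Q`. -/
def prodSemigroup (δ : X → Q → Q) (ρ : Q → X → X) :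
    Subsemigroup (Function.End (List X)) :=
  Subsemigroup.closure {f : Function.End (List X) | ∃ q : Q, f = rExt δ ρ q}

/-- The semigroup of maps `Q* → Q*` generated under composition by the `δ_i`, `i ∈ Σ`. -/
def dualSemigroup (δ : X → Q → Q) (ρ : Q → X → X) :
    Subsemigroup (Function.End (List Q)) :=
  Subsemigroup.closure {f : Function.End (List Q) | ∃ i : X, f = dExt δ ρ i}

/-- A word `w` over `Q` is orbital if all its factors of length `c+1`
belong to the reduction orbit `O2`. -/
def Orbital (c : ℕ) (O2 : Set (List Q)) (w : List Q) : Prop :=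
  ∀ f : List Q, f.length = c + 1 → f <:+: w → f ∈ O2

/-- A word is cyclically orbital if each of its powers is orbital. -/
def CycOrbital (c : ℕ) (O2 : Set (List Q)) (w : List Q) : Prop :=
  ∀ n : ℕ, Orbital c O2 (wpow w n)

/-- The standing setup: `A` is a connected invertible-reversible Mealy automaton
with 3 states, `0 < c = cd(A) < ∞`, and `Q^{c+1}` splits into exactly two orbits,
of sizes `2·3^c` and `3^c`; `O2` is the reduction orbit, of size `2·3^c`. -/
structure StandingSetup (δ : X → Q → Q) (ρ : Q → X → X) (c : ℕ) (O2 : Set (List Q)) :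
    Prop where
  card_three : Nat.card Q = 3
  invertible : ∀ q : Q, Function.Bijective (ρ q)
  reversible : ∀ i : X, Function.Bijective (δ i)
  connected : LevelTransitive δ ρ 1
  c_pos : 0 < c
  trans_c : LevelTransitive δ ρ c
  not_trans_succ : ¬ LevelTransitive δ ρ (c + 1)
  O2_is_orbit : ∃ w : List Q, w.length = c + 1 ∧ O2 = orbit δ ρ w
  O2_card : O2.ncard = 2 * 3 ^ c
  other_is_orbit : ∃ w : List Q, w.length = c + 1 ∧
    orbit δ ρ w = {v : List Q | v.length = c + 1} \ O2
  other_card : ({v : List Q | v.length = c + 1} \ O2).ncard = 3 ^ c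



section Aux

variable {Q X : Type*} {δ : X → Q → Q} {ρ : Q → X → X}

/-! ### The two actions on words -/

/-- The action `δ_s` of a word `s` over the alphabet on a single state. -/
def dState (δ : X → Q → Q) : List X → Q → Q
  | [], x => x
  | i :: s, x => dState δ s (δ i x)

theorem dWord_nil (s : List X) : dWord δ ρ s [] = [] := by
  induction s with
  | nil => rfl
  | cons i s ih => simpa [dWord, dExt] using ih

theorem dWord_cons (s : List X) (x : Q) (v : List Q) :
    dWord δ ρ s (x :: v) = dState δ s x :: dWord δ ρ (rExt δ ρ x s) v := by
  induction s generalizing x v with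
  | nil => rfl
  | cons i s ih => simp [dWord, dExt, dState, rExt, ih]

theorem dWord_append (s : List X) (u v : List Q) :
    dWord δ ρ s (u ++ v) = dWord δ ρ s u ++ dWord δ ρ (rWord δ ρ u s) v := by
  induction u generalizing s with
  | nil => simp [dWord_nil, rWord]
  | cons x u ih => simp [dWord_cons, rWord, ih]

theorem dWord_singleton (s : List X) (x : Q) : dWord δ ρ s [x] = [dState δ s x] := by
  simp [dWord_cons, dWord_nil]

theorem dWord_word_append (s t : List X) (u : List Q) :
    dWord δ ρ (s ++ t) u = dWord δ ρ t (dWord δ ρ s u) := by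
  induction s generalizing u with
  | nil => rfl
  | cons i s ih => simp [dWord, ih]

theorem length_dWord (s : List X) (u : List Q) : (dWord δ ρ s u).length = u.length := by
  induction u generalizing s with
  | nil => simp [dWord_nil]
  | cons x u ih => simp [dWord_cons, ih]

theorem rWord_append (u v : List Q) (s : List X) :
    rWord δ ρ (u ++ v) s = rWord δ ρ v (rWord δ ρ u s) := by
  induction u generalizing s with
  | nil => rfl
  | cons x u ih => simp [rWord, ih]

theorem rExt_append (x : Q) (s t : List X) :
    rExt δ ρ x (s ++ t) = rExt δ ρ x s ++ rExt δ ρ (dState δ s x) t := by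
  induction s generalizing x with
  | nil => rfl
  | cons i s ih => simp [rExt, dState, ih]

theorem length_rExt (x : Q) (s : List X) : (rExt δ ρ x s).length = s.length := by
  induction s generalizing x with
  | nil => rfl
  | cons i s ih => simp [rExt, ih]

theorem rWord_word_append (u : List Q) (s t : List X) :
    rWord δ ρ u (s ++ t) = rWord δ ρ u s ++ rWord δ ρ (dWord δ ρ s u) t := by
  induction u generalizing s t with
  | nil => simp [rWord, dWord_nil]
  | cons x u ih => simp [rWord, rExt_append, dWord_cons, ih]

/-- Words acting identically on `Σ*` still do after moving both by the same `δ_s`. -/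
theorem rWord_dWord_congr {v w : List Q} (h : rWord δ ρ v = rWord δ ρ w) (s : List X) :
    rWord δ ρ (dWord δ ρ s v) = rWord δ ρ (dWord δ ρ s w) := by
  funext t
  have h1 := congrFun h (s ++ t)
  rw [rWord_word_append, rWord_word_append, congrFun h s] at h1
  exact List.append_cancel_left h1

theorem rExt_bijective (hinv : ∀ q : Q, Function.Bijective (ρ q)) (x : Q) :
    Function.Bijective (rExt δ ρ x) := by
  constructor
  · intro s t h
    induction s generalizing x t with
    | nil => cases t with
      | nil => rfl
      | cons j t => simp [rExt] at h
    | cons i s ih => cases t with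
      | nil => simp [rExt] at h
      | cons j t =>
        simp only [rExt, List.cons.injEq] at h
        obtain rfl := (hinv x).1 h.1
        rw [ih _ h.2]
  · intro t
    induction t generalizing x with
    | nil => exact ⟨[], rfl⟩
    | cons j t ih =>
      obtain ⟨i, rfl⟩ := (hinv x).2 j
      obtain ⟨s, rfl⟩ := ih (δ i x)
      exact ⟨i :: s, rfl⟩

theorem rWord_bijective (hinv : ∀ q : Q, Function.Bijective (ρ q)) (u : List Q) :
    Function.Bijective (rWord δ ρ u) := by
  induction u with
  | nil => exact Function.bijective_id
  | cons x u ih => exact ih.comp (rExt_bijective hinv x)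

theorem dExt_injective (hrev : ∀ i : X, Function.Bijective (δ i)) (i : X) :
    Function.Injective (dExt δ ρ i) := by
  intro u v h
  induction u generalizing i v with
  | nil => cases v with
    | nil => rfl
    | cons y v => simp [dExt] at h
  | cons x u ih => cases v with
    | nil => simp [dExt] at h
    | cons y v =>
      simp only [dExt, List.cons.injEq] at h
      obtain rfl := (hrev i).1 h.1
      rw [ih _ h.2]

theorem dWord_injective (hrev : ∀ i : X, Function.Bijective (δ i)) (s : List X) :
    Function.Injective (dWord δ ρ s) := by
  induction s with
  | nil => exact Function.injective_id
  | cons i s ih => exact ih.comp (dExt_injective hrev i)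

/-- Inverses of the dual action are attained by positive words, uniformly on words of bounded
length, because an injective self-map of a finite set has finite order. -/
theorem exists_inverse [Finite Q] (hrev : ∀ i : X, Function.Bijective (δ i)) (s : List X)
    (n : ℕ) : ∃ t : List X, ∀ u : List Q, u.length ≤ n → dWord δ ρ t (dWord δ ρ s u) = u := by
  have hfin : Finite {u : List Q // u.length ≤ n} := (List.finite_length_le Q n).to_subtype
  let f : {u : List Q // u.length ≤ n} → {u : List Q // u.length ≤ n} :=
    fun u => ⟨dWord δ ρ s u.1, by rw [length_dWord]; exact u.2⟩
  have hf : Function.Injective f := fun u v h =>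
    Subtype.ext (dWord_injective hrev s (congrArg Subtype.val h))
  let e : Equiv.Perm {u : List Q // u.length ≤ n} :=
    Equiv.ofBijective f (Finite.injective_iff_bijective.1 hf)
  have hpow : ∀ k : ℕ, ∃ t : List X, ∀ u, ((e ^ k) u).1 = dWord δ ρ t u.1 := by
    intro k
    induction k with
    | zero => exact ⟨[], fun u => rfl⟩
    | succ k ih =>
      obtain ⟨t, ht⟩ := ih
      refine ⟨s ++ t, fun u => ?_⟩
      rw [pow_succ, Equiv.Perm.mul_apply, ht, dWord_word_append]
      rfl
  obtain ⟨t, ht⟩ := hpow (orderOf e - 1)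
  refine ⟨t, fun u hu => ?_⟩
  have h1 : (e ^ (orderOf e - 1)) (e ⟨u, hu⟩) = ⟨u, hu⟩ := by
    rw [← Equiv.Perm.mul_apply, ← pow_succ,
      Nat.sub_add_cancel (orderOf_pos e), pow_orderOf_eq_one]
    rfl
  have h2 := congrArg Subtype.val h1
  rw [ht] at h2
  exact h2

/-! ### Orbits of the dual action -/

theorem InOrbit.refl (u : List Q) : InOrbit δ ρ u u := ⟨[], rfl⟩

theorem InOrbit.trans {u v w : List Q} (h : InOrbit δ ρ u v) (h' : InOrbit δ ρ v w) :
    InOrbit δ ρ u w := by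
  obtain ⟨s, rfl⟩ := h
  obtain ⟨t, rfl⟩ := h'
  exact ⟨s ++ t, dWord_word_append s t u⟩

theorem InOrbit.symm [Finite Q] (hrev : ∀ i : X, Function.Bijective (δ i)) {u v : List Q}
    (h : InOrbit δ ρ u v) : InOrbit δ ρ v u := by
  obtain ⟨s, rfl⟩ := h
  obtain ⟨t, ht⟩ := exists_inverse (ρ := ρ) hrev s u.length
  exact ⟨t, ht u le_rfl⟩

/-- Moving `u x` and `u z` by the same `δ_s` gives two words with a common prefix again. -/
theorem InOrbit.move [Finite Q] (hrev : ∀ i : X, Function.Bijective (δ i)) {u : List Q} {x z : Q}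
    (h : InOrbit δ ρ (u ++ [x]) (u ++ [z])) (s : List X) :
    InOrbit δ ρ (dWord δ ρ s u ++ [dState δ (rWord δ ρ u s) x])
      (dWord δ ρ s u ++ [dState δ (rWord δ ρ u s) z]) := by
  have key : ∀ y, dWord δ ρ s (u ++ [y]) = dWord δ ρ s u ++ [dState δ (rWord δ ρ u s) y] := by
    intro y; rw [dWord_append, dWord_singleton]
  rw [← key, ← key]
  exact (InOrbit.symm hrev ⟨s, rfl⟩).trans (h.trans ⟨s, rfl⟩)

/-- Suffixes of equal length of words in one orbit lie in one orbit. -/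
theorem InOrbit.suffix {u u' v v' : List Q} (hl : u.length = u'.length)
    (h : InOrbit δ ρ (u ++ v) (u' ++ v')) : InOrbit δ ρ v v' := by
  obtain ⟨s, hs⟩ := h
  rw [dWord_append] at hs
  exact ⟨_, (List.append_inj hs (by rw [length_dWord, hl])).2⟩

theorem dState_injective (hrev : ∀ i : X, Function.Bijective (δ i)) (s : List X) :
    Function.Injective (dState δ s) := by
  induction s with
  | nil => exact Function.injective_id
  | cons i s ih => exact ih.comp (hrev i).1

/-! ### Finiteness from bounded orbits -/

/-- The map `ρ_u` is computed by the automaton whose states are the words in the orbit of `u`.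
If the orbits are bounded by `B`, this automaton can be relabelled to have stateset `Fin (B+1)`,
so only finitely many maps `ρ_u` arise. -/
theorem finite_rWord_of_bounded [Finite Q] [Finite X] (V : Set (List Q)) (B : ℕ)
    (hV : ∀ u ∈ V, (orbit δ ρ u).ncard ≤ B) : (rWord δ ρ '' V).Finite := by
  classical
  let F : (Fin (B + 1) × (X → Fin (B + 1) → Fin (B + 1)) × (Fin (B + 1) → X → X)) →
      (List X → List X) := fun p => rExt p.2.1 p.2.2 p.1
  refine (Set.finite_range F).subset ?_
  rintro _ ⟨u, hu, rfl⟩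
  have horb : (orbit δ ρ u).Finite := (List.finite_length_eq Q u.length).subset (by
    rintro _ ⟨s, rfl⟩; exact length_dWord s u)
  have : Finite (orbit δ ρ u) := horb.to_subtype
  have : Fintype (orbit δ ρ u) := Fintype.ofFinite _
  have hcard : Fintype.card (orbit δ ρ u) ≤ Fintype.card (Fin (B + 1)) := by
    rw [Fintype.card_fin, ← Nat.card_eq_fintype_card]
    exact (hV u hu).trans (Nat.le_succ B)
  obtain ⟨ι⟩ := Function.Embedding.nonempty_of_card_le hcard
  let u0 : orbit δ ρ u := ⟨u, InOrbit.refl u⟩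
  have : Nonempty (orbit δ ρ u) := ⟨u0⟩
  let back : Fin (B + 1) → orbit δ ρ u := Function.invFun ι
  have hback : ∀ w, back (ι w) = w := Function.leftInverse_invFun ι.injective
  let D : X → orbit δ ρ u → orbit δ ρ u := fun i w =>
    ⟨dWord δ ρ [i] w.1, InOrbit.trans w.2 ⟨[i], rfl⟩⟩
  -- `ρ_w` maps letters to letters; this is the output letter
  let out : List Q → X → X := fun w i => (rWord δ ρ w [i]).headD i
  have hlen : ∀ (w : List Q) (s : List X), (rWord δ ρ w s).length = s.length := by
    intro w
    induction w with
    | nil => intro s; rfl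
    | cons x w ih => intro s; simp [rWord, ih, length_rExt]
  have hout : ∀ w i, rWord δ ρ w [i] = [out w i] := by
    intro w i
    obtain ⟨j, hj⟩ := List.length_eq_one_iff.1 (hlen w [i])
    simp [out, hj]
  let δ' : X → Fin (B + 1) → Fin (B + 1) := fun i k => ι (D i (back k))
  let ρ' : Fin (B + 1) → X → X := fun k i => out (back k).1 i
  have key : ∀ (s : List X) (w : orbit δ ρ u), rExt δ' ρ' (ι w) s = rWord δ ρ w.1 s := by
    intro s
    induction s with
    | nil => intro w; exact (List.eq_nil_of_length_eq_zero (hlen w.1 [])).symm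
    | cons i s ih =>
      intro w
      have h1 := rWord_word_append (δ := δ) (ρ := ρ) w.1 [i] s
      rw [List.singleton_append] at h1
      rw [h1, hout]
      simp only [rExt, ρ', δ', hback, List.singleton_append, ih]
      rfl
  exact ⟨(ι u0, δ', ρ'), funext fun s => key s u0⟩

/-- If the labels along `w` are `1` from depth `n` on, then a dual element fixing the prefix of
length `n` fixes `w`, so the orbit of `w` has at most as many elements as there are words of
length at most `n`. -/
theorem ncard_orbit_le [Finite Q] (hrev : ∀ i : X, Function.Bijective (δ i)) (n : ℕ) (w : List Q)
    (h : ∀ u x, u ++ [x] <+: w → n ≤ u.length → ∀ z,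
      InOrbit δ ρ (u ++ [x]) (u ++ [z]) → x = z) :
    (orbit δ ρ w).ncard ≤ {u : List Q | u.length ≤ n}.ncard := by
  have fixed : ∀ s, dWord δ ρ s (w.take n) = w.take n → dWord δ ρ s w = w := by
    intro s
    induction w using List.reverseRecOn with
    | nil => intro _; exact dWord_nil s
    | append_singleton w x ih =>
      intro hs
      rcases Nat.lt_or_ge w.length n with hn | hn
      · rwa [List.take_of_length_le (by simp; omega)] at hs
      · rw [List.take_append_of_le_length hn] at hs
        have h1 := ih (fun u y hu => h u y (hu.trans (List.prefix_append _ _))) hs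
        have h2 : dWord δ ρ s (w ++ [x]) = w ++ [dState δ (rWord δ ρ w s) x] := by
          rw [dWord_append, dWord_singleton, h1]
        have h3 := h w x List.prefix_rfl hn _ ⟨s, h2⟩
        rw [h2, ← h3]
  refine Set.ncard_le_ncard_of_injOn (fun v => v.take n) ?_ ?_ (List.finite_length_le Q n)
  · intro v _; simp
  · rintro _ ⟨s, rfl⟩ _ ⟨s', rfl⟩ heq
    have htake : ∀ s, (dWord δ ρ s w).take n = dWord δ ρ s (w.take n) := by
      intro s
      rcases le_total w.length n with hn | hn
      · rw [List.take_of_length_le hn, List.take_of_length_le (by rwa [length_dWord])]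
      · conv_lhs => rw [← List.take_append_drop n w, dWord_append]
        exact List.take_left' (by simp [length_dWord, hn])
    simp only [htake] at heq
    obtain ⟨t, ht⟩ := exists_inverse (ρ := ρ) hrev s w.length
    have h1 := fixed (s' ++ t) (by
      rw [dWord_word_append, ← heq, ht _ (by simp)])
    rw [dWord_word_append] at h1
    apply dWord_injective hrev t
    rw [h1, ht w le_rfl]

/-! ### Torsion and periodic words -/

theorem wpow_succ (p : List Q) (n : ℕ) : wpow p (n + 1) = p ++ wpow p n := by
  simp [wpow, List.replicate_succ]

theorem wpow_add (p : List Q) (m n : ℕ) : wpow p (m + n) = wpow p m ++ wpow p n := by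
  induction m with
  | zero => simp [wpow]
  | succ m ih => rw [Nat.succ_add, wpow_succ, wpow_succ, ih, List.append_assoc]

theorem length_wpow (p : List Q) (n : ℕ) : (wpow p n).length = n * p.length := by
  induction n with
  | zero => simp [wpow]
  | succ n ih => rw [wpow_succ, List.length_append, ih]; ring

theorem exists_mem_autGroup (hinv : ∀ q : Q, Function.Bijective (ρ q)) (u : List Q) :
    ∃ π ∈ autGroup δ ρ, ⇑π = rWord δ ρ u := by
  induction u with
  | nil => exact ⟨1, one_mem _, rfl⟩
  | cons x u ih =>
    obtain ⟨π, hπ, h⟩ := ih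
    refine ⟨π * Equiv.ofBijective _ (rExt_bijective (δ := δ) hinv x),
      mul_mem hπ (Subgroup.subset_closure ⟨x, rfl⟩), ?_⟩
    funext s
    rw [Equiv.Perm.mul_apply, h]
    rfl

theorem exists_wpow_eq_id (hinv : ∀ q : Q, Function.Bijective (ρ q))
    (hburnside : ∀ g ∈ autGroup δ ρ, IsOfFinOrder g) (p : List Q) :
    ∃ k, 0 < k ∧ rWord δ ρ (wpow p k) = id := by
  obtain ⟨π, hπ, h⟩ := exists_mem_autGroup (δ := δ) hinv p
  have hpow : ∀ k, ⇑(π ^ k) = rWord δ ρ (wpow p k) := by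
    intro k
    induction k with
    | zero => rfl
    | succ k ih =>
      funext s
      rw [pow_succ, Equiv.Perm.mul_apply, ih, h, wpow_succ, rWord_append]
  refine ⟨orderOf π, (hburnside π hπ).orderOf_pos, ?_⟩
  rw [← hpow, pow_orderOf_eq_one]
  rfl

/-- If `ρ_g` is trivial then every word in the orbit of `g g` is a square, so the last letter of
`g g` cannot be changed within the orbit: the label along `p^∞` is infinitely often `1`
when `ρ_p` has finite order. -/
theorem label_one_of_torsion (hinv : ∀ q : Q, Function.Bijective (ρ q))
    (hburnside : ∀ g ∈ autGroup δ ρ, IsOfFinOrder g) (p : List Q) (hp : p ≠ []) (M : ℕ) :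
    ∃ u x, M ≤ u.length ∧ (∃ n, wpow p n = u ++ [x]) ∧
      ∀ z, InOrbit δ ρ (u ++ [x]) (u ++ [z]) → z = x := by
  obtain ⟨k, hk, hid⟩ := exists_wpow_eq_id hinv hburnside p
  have hid' : ∀ m, rWord δ ρ (wpow p (m * k)) = id := by
    intro m
    induction m with
    | zero => simp [wpow]; rfl
    | succ m ih =>
      rw [Nat.succ_mul, wpow_add]
      funext s
      rw [rWord_append, ih, hid]
      rfl
  set g := wpow p ((M + 1) * k) with hg
  have hgid : rWord δ ρ g = id := hid' (M + 1)
  have hplen : 0 < p.length := List.length_pos_iff.2 hp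
  have hglen : M + 1 ≤ g.length := by
    rw [hg, length_wpow, mul_assoc]
    exact Nat.le_mul_of_pos_right _ (Nat.mul_pos hk hplen)
  obtain ⟨g', x, hgx⟩ : ∃ g' x, g = g' ++ [x] := by
    rcases List.eq_nil_or_concat g with h | ⟨l, b, h⟩
    · rw [h] at hglen; simp at hglen
    · exact ⟨l, b, by simpa using h⟩
  refine ⟨g ++ g', x, ?_, ⟨(M + 1) * k + (M + 1) * k, ?_⟩, ?_⟩
  · simp only [List.length_append]; omega
  · rw [wpow_add, ← hg, List.append_assoc, ← hgx]
  · rintro z ⟨s, hs⟩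
    rw [List.append_assoc, ← hgx, dWord_append, hgid, List.append_assoc] at hs
    obtain ⟨h1, h2⟩ := List.append_inj hs (length_dWord _ _)
    rw [id, h1, hgx] at h2
    simpa using h2.symm

/-! ### Active letters and orbital walks -/

/-- The letter `x` is active after `a` when the label of `a x` is at least `2`. -/
def Active (δ : X → Q → Q) (ρ : Q → X → X) (a : List Q) (x : Q) : Prop :=
  ∃ z, z ≠ x ∧ InOrbit δ ρ (a ++ [x]) (a ++ [z])

/-- The word `v` can be read from the window `a` (the last letters read so far, of constant
length): each letter of `v` is active after the window preceding it. For `a` of length `c`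
this says that `a v` is orbital. -/
def Walk (δ : X → Q → Q) (ρ : Q → X → X) : List Q → List Q → Prop
  | _, [] => True
  | a, x :: v => Active δ ρ a x ∧ Walk δ ρ (a ++ [x]).tail v

/-- The window reached from the window `a` after reading `v`. -/
def walkEnd : List Q → List Q → List Q
  | a, [] => a
  | a, x :: v => walkEnd (a ++ [x]).tail v

theorem walk_append (a v w : List Q) :
    Walk δ ρ a (v ++ w) ↔ Walk δ ρ a v ∧ Walk δ ρ (walkEnd a v) w := by
  induction v generalizing a with
  | nil => simp [Walk, walkEnd]
  | cons x v ih => simp [Walk, walkEnd, ih, and_assoc]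

theorem walkEnd_append (a v w : List Q) : walkEnd a (v ++ w) = walkEnd (walkEnd a v) w := by
  induction v generalizing a with
  | nil => rfl
  | cons x v ih => simp [walkEnd, ih]

theorem length_walkEnd (a v : List Q) : (walkEnd a v).length = a.length := by
  induction v generalizing a with
  | nil => rfl
  | cons x v ih => simp [walkEnd, ih]

theorem walkEnd_eq_drop (a v : List Q) : walkEnd a v = (a ++ v).drop v.length := by
  induction v generalizing a with
  | nil => simp [walkEnd]
  | cons x v ih =>
    rw [walkEnd, ih, List.length_cons, Nat.add_comm, ← List.drop_drop]
    congr 1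
    rw [List.drop_one]
    cases a <;> simp

theorem walkEnd_of_length_eq {a v : List Q} (h : a.length = v.length) : walkEnd a v = v := by
  rw [walkEnd_eq_drop, ← h, List.drop_left]

theorem Active.move [Finite Q] (hrev : ∀ i : X, Function.Bijective (δ i)) {a : List Q} {x : Q}
    (h : Active δ ρ a x) (s : List X) :
    Active δ ρ (dWord δ ρ s a) (dState δ (rWord δ ρ a s) x) := by
  obtain ⟨z, hz, h⟩ := h
  exact ⟨_, fun e => hz (dState_injective hrev _ e), h.move hrev s⟩

theorem tail_move (s : List X) (a : List Q) (x : Q) :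
    ∃ σ, (dWord δ ρ s a ++ [dState δ (rWord δ ρ a s) x]).tail = dWord δ ρ σ (a ++ [x]).tail ∧
      rWord δ ρ (a ++ [x]).tail σ = rExt δ ρ x (rWord δ ρ a s) := by
  have h1 : dWord δ ρ s a ++ [dState δ (rWord δ ρ a s) x] = dWord δ ρ s (a ++ [x]) := by
    rw [dWord_append, dWord_singleton]
  have h2 : rWord δ ρ (a ++ [x]) s = rExt δ ρ x (rWord δ ρ a s) := by
    rw [rWord_append]; rfl
  rw [h1, ← h2]
  cases h : a ++ [x] with
  | nil => simp at h
  | cons y m => exact ⟨rExt δ ρ y s, by simp [dWord_cons], rfl⟩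

theorem walk_move [Finite Q] (hrev : ∀ i : X, Function.Bijective (δ i)) {a v : List Q}
    (h : Walk δ ρ a v) (s : List X) :
    Walk δ ρ (dWord δ ρ s a) (dWord δ ρ (rWord δ ρ a s) v) := by
  induction v generalizing a s with
  | nil => rw [dWord_nil]; trivial
  | cons x v ih =>
    obtain ⟨σ, h1, h2⟩ := tail_move (δ := δ) (ρ := ρ) s a x
    rw [dWord_cons]
    refine ⟨h.1.move hrev s, ?_⟩
    rw [h1, ← h2]
    exact ih h.2 σ

theorem walkEnd_move (a v : List Q) (s : List X) :
    ∃ σ, walkEnd (dWord δ ρ s a) (dWord δ ρ (rWord δ ρ a s) v) = dWord δ ρ σ (walkEnd a v) ∧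
      rWord δ ρ (walkEnd a v) σ = rWord δ ρ v (rWord δ ρ a s) := by
  induction v generalizing a s with
  | nil => exact ⟨s, by simp [dWord_nil, walkEnd], rfl⟩
  | cons x v ih =>
    obtain ⟨σ, h1, h2⟩ := tail_move (δ := δ) (ρ := ρ) s a x
    obtain ⟨τ, h3, h4⟩ := ih (a ++ [x]).tail σ
    refine ⟨τ, ?_, ?_⟩
    · rw [dWord_cons, walkEnd, h1, ← h2, h3]; rfl
    · rw [walkEnd, h4, h2]; rfl

/-- Two walks from `a` with the same end and the same action keep this property when moved by
a dual element: the element moving the common end `b` is `ρ_b⁻¹ ρ_v ρ_a (s)`. -/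
theorem move_congr (hinv : ∀ q : Q, Function.Bijective (ρ q)) {a v w : List Q}
    (he : walkEnd a v = walkEnd a w) (hr : rWord δ ρ v = rWord δ ρ w) (s : List X) :
    walkEnd (dWord δ ρ s a) (dWord δ ρ (rWord δ ρ a s) v) =
        walkEnd (dWord δ ρ s a) (dWord δ ρ (rWord δ ρ a s) w) ∧
      rWord δ ρ (dWord δ ρ (rWord δ ρ a s) v) = rWord δ ρ (dWord δ ρ (rWord δ ρ a s) w) := by
  refine ⟨?_, rWord_dWord_congr hr _⟩
  obtain ⟨σ, h1, h2⟩ := walkEnd_move (δ := δ) (ρ := ρ) a v s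
  obtain ⟨τ, h3, h4⟩ := walkEnd_move (δ := δ) (ρ := ρ) a w s
  rw [h1, h3, ← he]
  rw [← he, ← hr, ← h2] at h4
  rw [(rWord_bijective hinv _).1 h4]

theorem active_move_iff [Finite Q] (hrev : ∀ i : X, Function.Bijective (δ i)) (a : List Q) (x : Q)
    (s : List X) :
    Active δ ρ (dWord δ ρ s a) (dState δ (rWord δ ρ a s) x) ↔ Active δ ρ a x := by
  refine ⟨fun h => ?_, fun h => h.move hrev s⟩
  obtain ⟨t, ht⟩ := exists_inverse (ρ := ρ) hrev s (a.length + 1)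
  have h1 := h.move hrev t
  have h2 := ht (a ++ [x]) (by simp)
  rw [dWord_append, dWord_singleton, dWord_append, dWord_singleton, ht a (by omega)] at h2
  rw [ht a (by omega)] at h1
  have h3 := List.append_cancel_left h2
  rw [List.cons.injEq] at h3
  rwa [h3.1] at h1

/-! ### The groupoid of orbital walks -/

/-- The pairs (end of the walk, action on `Σ*`) realized by the walks starting at `a`. -/
def reach (δ : X → Q → Q) (ρ : Q → X → X) (a : List Q) : Set (List Q × (List X → List X)) :=
  {p | ∃ v, Walk δ ρ a v ∧ walkEnd a v = p.1 ∧ rWord δ ρ v = p.2}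

theorem ncard_reach_le [Finite Q] (hinv : ∀ q : Q, Function.Bijective (ρ q))
    (hrev : ∀ i : X, Function.Bijective (δ i)) (a : List Q) (s : List X)
    (hfin : (reach δ ρ (dWord δ ρ s a)).Finite) :
    (reach δ ρ a).ncard ≤ (reach δ ρ (dWord δ ρ s a)).ncard := by
  have hch : ∀ p : List Q × (List X → List X), ∃ v, p ∈ reach δ ρ a →
      Walk δ ρ a v ∧ walkEnd a v = p.1 ∧ rWord δ ρ v = p.2 := by
    intro p
    by_cases hp : p ∈ reach δ ρ a
    · obtain ⟨v, hv⟩ := hp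
      exact ⟨v, fun _ => hv⟩
    · exact ⟨[], fun h => absurd h hp⟩
  choose V hV using hch
  refine Set.ncard_le_ncard_of_injOn
    (fun p => (walkEnd (dWord δ ρ s a) (dWord δ ρ (rWord δ ρ a s) (V p)),
      rWord δ ρ (dWord δ ρ (rWord δ ρ a s) (V p)))) ?_ ?_ hfin
  · intro p hp
    exact ⟨_, walk_move hrev (hV p hp).1 s, rfl, rfl⟩
  · intro p hp q hq hpq
    simp only [Prod.mk.injEq] at hpq
    obtain ⟨t, ht⟩ := exists_inverse (ρ := ρ) hrev s (a.length + (V p).length + (V q).length)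
    have hback : ∀ v, v.length ≤ (V p).length + (V q).length →
        dWord δ ρ (rWord δ ρ (dWord δ ρ s a) t) (dWord δ ρ (rWord δ ρ a s) v) = v := by
      intro v hv
      have h := ht (a ++ v) (by rw [List.length_append]; omega)
      rw [dWord_append, dWord_append, ht a (by omega)] at h
      exact List.append_cancel_left h
    have h := move_congr hinv hpq.1 hpq.2 t
    rw [hback _ (by omega), hback _ (by omega), ht a (by omega)] at h
    exact Prod.ext ((hV p hp).2.1.symm.trans (h.1.trans (hV q hq).2.1))
      ((hV p hp).2.2.symm.trans (h.2.trans (hV q hq).2.2))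

/-- When only finitely many maps are realized by orbital walks, walks are invertible: composing
with a walk `v` from `a` to `b` injects `reach b` into `reach a`, and these sets are equinumerous
by transitivity, so the trivial walk at `a` is in the image. -/
theorem exists_walk_inverse [Finite Q] (hinv : ∀ q : Q, Function.Bijective (ρ q))
    (hrev : ∀ i : X, Function.Bijective (δ i)) {c : ℕ} (hc : LevelTransitive δ ρ c)
    (hfin : ∀ a : List Q, a.length = c → (reach δ ρ a).Finite) {a v : List Q}
    (ha : a.length = c) (hv : Walk δ ρ a v) :
    ∃ r, Walk δ ρ (walkEnd a v) r ∧ walkEnd (walkEnd a v) r = a ∧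
      rWord δ ρ (v ++ r) = id ∧ rWord δ ρ (r ++ v) = id := by
  set b := walkEnd a v with hb
  have hbl : b.length = c := by rw [hb, length_walkEnd, ha]
  have hcard : (reach δ ρ a).ncard ≤ (reach δ ρ b).ncard := by
    obtain ⟨s, hs⟩ := hc a b ha hbl
    rw [← hs]
    exact ncard_reach_le hinv hrev a s (by rw [hs]; exact hfin b hbl)
  have hsurj := Set.surj_on_of_inj_on_of_ncard_le (s := reach δ ρ b) (t := reach δ ρ a)
    (fun p _ => (p.1, p.2 ∘ rWord δ ρ v)) (by
      rintro p ⟨w, hw, h1, h2⟩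
      refine ⟨v ++ w, (walk_append a v w).2 ⟨hv, hw⟩, ?_, ?_⟩
      · rw [walkEnd_append, ← hb, h1]
      · funext s
        rw [rWord_append, h2]; rfl) (by
      intro p q _ _ hpq
      simp only [Prod.mk.injEq] at hpq
      exact Prod.ext hpq.1 ((rWord_bijective hinv v).2.injective_comp_right hpq.2))
    hcard (hfin a ha)
  obtain ⟨p, ⟨r, hr, h1, h2⟩, h3⟩ := hsurj (a, id) ⟨[], trivial, rfl, rfl⟩
  simp only [Prod.mk.injEq] at h3
  have h4 : rWord δ ρ (v ++ r) = id := by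
    funext s
    rw [rWord_append, h2, h3.2]; rfl
  refine ⟨r, hr, h1.trans h3.1.symm, h4, ?_⟩
  funext s
  obtain ⟨t, rfl⟩ := (rWord_bijective (δ := δ) hinv v).2 s
  rw [rWord_append, ← rWord_append v r, h4]
  rfl

/-- Two windows are linked if a walk with trivial action leads from the first to the second. -/
def Linked (δ : X → Q → Q) (ρ : Q → X → X) (a b : List Q) : Prop :=
  ∃ v, Walk δ ρ a v ∧ walkEnd a v = b ∧ rWord δ ρ v = id

/-- After every word of length `c` exactly two of the three letters are active, and they lie
in the same orbit. -/
def TwoActive (δ : X → Q → Q) (ρ : Q → X → X) (c : ℕ) : Prop :=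
  ∀ a : List Q, a.length = c → ∃ x y z : Q, x ≠ y ∧ (∀ p, p = x ∨ p = y ∨ p = z) ∧
    Active δ ρ a x ∧ Active δ ρ a y ∧ ¬ Active δ ρ a z ∧ InOrbit δ ρ (a ++ [x]) (a ++ [y])

theorem TwoActive.active_iff {c : ℕ} (h : TwoActive δ ρ c) {a : List Q} (ha : a.length = c)
    {x₀ : Q} (hx₀ : ¬ Active δ ρ a x₀) (p : Q) : Active δ ρ a p ↔ p ≠ x₀ := by
  obtain ⟨x, y, z, -, hall, hx, hy, hz, -⟩ := h a ha
  have h0 : x₀ = z := by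
    rcases hall x₀ with rfl | rfl | rfl
    · exact absurd hx hx₀
    · exact absurd hy hx₀
    · rfl
  subst h0
  refine ⟨fun hp e => hz (e ▸ hp), fun hp => ?_⟩
  rcases hall p with rfl | rfl | rfl
  · exact hx
  · exact hy
  · exact absurd rfl hp

theorem ncard_walks {c : ℕ} [Finite Q] (h : TwoActive δ ρ c) (n : ℕ) (a : List Q)
    (ha : a.length = c) :
    {w : List Q | w.length = n ∧ Walk δ ρ a w}.ncard = 2 ^ n := by
  induction n generalizing a with
  | zero =>
    have : {w : List Q | w.length = 0 ∧ Walk δ ρ a w} = {[]} := by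
      ext w
      simp only [Set.mem_ofPred_eq, Set.mem_singleton_iff, List.length_eq_zero_iff]
      exact ⟨fun h => h.1, fun h => ⟨h, h ▸ trivial⟩⟩
    rw [this, Set.ncard_singleton, pow_zero]
  | succ n ih =>
    obtain ⟨x, y, z, hxy, hall, hx, hy, hz, -⟩ := h a ha
    have hsplit : {w : List Q | w.length = n + 1 ∧ Walk δ ρ a w} =
        (List.cons x '' {w : List Q | w.length = n ∧ Walk δ ρ (a ++ [x]).tail w}) ∪
        (List.cons y '' {w : List Q | w.length = n ∧ Walk δ ρ (a ++ [y]).tail w}) := by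
      ext w
      simp only [Set.mem_ofPred_eq, Set.mem_union, Set.mem_image]
      constructor
      · rintro ⟨hl, hw⟩
        cases w with
        | nil => simp at hl
        | cons p w =>
          have hl' : w.length = n := by simpa using hl
          rcases hall p with rfl | rfl | rfl
          · exact Or.inl ⟨w, ⟨hl', hw.2⟩, rfl⟩
          · exact Or.inr ⟨w, ⟨hl', hw.2⟩, rfl⟩
          · exact absurd hw.1 hz
      · rintro (⟨w, ⟨hl, hw⟩, rfl⟩ | ⟨w, ⟨hl, hw⟩, rfl⟩)
        · exact ⟨by simp [hl], hx, hw⟩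
        · exact ⟨by simp [hl], hy, hw⟩
    have hf : ∀ b : List Q, {w : List Q | w.length = n ∧ Walk δ ρ b w}.Finite := fun b =>
      (List.finite_length_eq Q n).subset fun w hw => hw.1
    rw [hsplit, Set.ncard_union_eq ?_ ((hf _).image _) ((hf _).image _),
      Set.ncard_image_of_injective _ (List.cons_injective),
      Set.ncard_image_of_injective _ (List.cons_injective), ih _ (by simp [ha]),
      ih _ (by simp [ha]), pow_succ]
    · ring
    · rw [Set.disjoint_left]
      rintro _ ⟨w, -, rfl⟩ ⟨w', -, h⟩
      rw [List.cons.injEq] at h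
      exact hxy h.1.symm

/-- If the forbidden letter were constant on a class of linked windows, it would be constant on
every class, by transitivity. The sets of words of length `c` readable from the windows would
then partition `Q^c`: if `w` is readable from `a` and `b`, then `a` and `b` are linked through `w`,
hence read the same words. As each part has `2^c` elements, `2^c` would divide `3^c`. -/
theorem exists_linked_active [Finite Q] (hcard : Nat.card Q = 3)
    (hinv : ∀ q : Q, Function.Bijective (ρ q))
    (hrev : ∀ i : X, Function.Bijective (δ i)) {c : ℕ} (hc : LevelTransitive δ ρ c) (hpos : 0 < c)
    (h2 : TwoActive δ ρ c) (hfin : ∀ a : List Q, a.length = c → (reach δ ρ a).Finite)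
    (a : List Q) (ha : a.length = c) (x : Q) : ∃ b, Linked δ ρ a b ∧ Active δ ρ b x := by
  classical
  by_contra! hno
  have hlen : ∀ {a b : List Q}, Linked δ ρ a b → b.length = a.length := by
    rintro a b ⟨v, -, rfl, -⟩
    exact length_walkEnd a v
  have hsame : ∀ a' b', a'.length = c → Linked δ ρ a' b' → ∀ z,
      (Active δ ρ a' z ↔ Active δ ρ b' z) := by
    rintro a' b' ha' ⟨v', hv', rfl, hid⟩ z
    obtain ⟨t, rfl⟩ := hc a' a ha' ha
    obtain ⟨σ, h3, h4⟩ := walkEnd_move (δ := δ) (ρ := ρ) a' v' t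
    rw [hid, id] at h4
    have hl : Linked δ ρ (dWord δ ρ t a') (dWord δ ρ σ (walkEnd a' v')) := by
      refine ⟨_, walk_move hrev hv' t, h3, ?_⟩
      have h5 := rWord_dWord_congr (δ := δ) (ρ := ρ) (v := v') (w := []) (hid.trans rfl)
        (rWord δ ρ a' t)
      rw [h5, dWord_nil]
      rfl
    rw [← active_move_iff hrev a' z t, ← active_move_iff hrev (walkEnd a' v') z σ, h4,
      h2.active_iff ha (hno _ ⟨[], trivial, rfl, rfl⟩),
      h2.active_iff ((hlen hl).trans ha) (hno _ hl)]
  have hsymm : ∀ a b, a.length = c → Linked δ ρ a b → Linked δ ρ b a := by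
    rintro a b ha ⟨v, hv, rfl, hid⟩
    obtain ⟨r, hr, h1, h3, -⟩ := exists_walk_inverse hinv hrev hc hfin ha hv
    refine ⟨r, hr, h1, ?_⟩
    funext s
    have := congrFun h3 s
    rwa [rWord_append, hid] at this
  have hstep : ∀ a b z, a.length = c → Linked δ ρ a b → Active δ ρ a z → Active δ ρ b z →
      Linked δ ρ (a ++ [z]).tail (b ++ [z]).tail := by
    rintro a b z ha ⟨v, hv, rfl, hid⟩ hz hz'
    obtain ⟨r, hr, h1, -, h3⟩ := exists_walk_inverse (v := [z]) hinv hrev hc hfin ha ⟨hz, trivial⟩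
    change Walk δ ρ (a ++ [z]).tail r at hr
    change walkEnd (a ++ [z]).tail r = a at h1
    refine ⟨r ++ (v ++ [z]), ?_, ?_, ?_⟩
    · rw [walk_append, h1, walk_append]
      exact ⟨hr, hv, hz', trivial⟩
    · rw [walkEnd_append, h1, walkEnd_append]
      rfl
    · funext s
      have h5 := congrFun h3 s
      rw [rWord_append] at h5
      rw [rWord_append, rWord_append, hid]
      exact h5
  have hread : ∀ w a b, a.length = c → Linked δ ρ a b → Walk δ ρ a w → Walk δ ρ b w := by
    intro w
    induction w with
    | nil => intros; trivial
    | cons z w ih =>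
      intro a b ha hab hw
      have hz := (hsame a b ha hab z).1 hw.1
      exact ⟨hz, ih _ _ (by simp [ha]) (hstep a b z ha hab hw.1 hz) hw.2⟩
  have hmeet : ∀ w a b, w.length = c → a.length = c → b.length = c → Walk δ ρ a w →
      Walk δ ρ b w → Linked δ ρ a b := by
    intro w a b hw ha hb haw hbw
    obtain ⟨r, hr, h1, h3, -⟩ := exists_walk_inverse hinv hrev hc hfin hb hbw
    rw [walkEnd_of_length_eq (hb.trans hw.symm)] at hr h1
    refine ⟨w ++ r, (walk_append a w r).2 ⟨haw, ?_⟩, ?_, h3⟩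
    · rwa [walkEnd_of_length_eq (ha.trans hw.symm)]
    · rwa [walkEnd_append, walkEnd_of_length_eq (ha.trans hw.symm)]
  have hex : ∀ w : List Q, w.length = c → ∃ b, b.length = c ∧ Walk δ ρ b w := by
    intro w hw
    obtain ⟨w₀, hw₀⟩ : {w : List Q | w.length = c ∧ Walk δ ρ a w}.Nonempty := by
      apply Set.nonempty_of_ncard_ne_zero
      rw [ncard_walks h2 c a ha]
      positivity
    obtain ⟨σ, rfl⟩ := hc w₀ w hw₀.1 hw
    obtain ⟨s, rfl⟩ := (rWord_bijective (δ := δ) hinv a).2 σ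
    exact ⟨_, (length_dWord s a).trans ha, walk_move hrev hw₀.2 s⟩
  let V : Finset (List Q) := (List.finite_length_eq Q c).toFinset
  have hV : ∀ w, w ∈ V ↔ w.length = c := fun w => by simp [V]
  have hVcard : V.card = 3 ^ c := by
    have : Fintype Q := Fintype.ofFinite Q
    rw [← Set.ncard_eq_toFinset_card _ (List.finite_length_eq Q c)]
    have := card_vector (α := Q) c
    rw [← Nat.card_eq_fintype_card, ← Nat.card_eq_fintype_card, hcard] at this
    exact this
  let P : Finset (Finset (List Q)) := V.image fun b => V.filter fun w => Walk δ ρ b w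
  have hPV : P.biUnion id = V := by
    ext w
    simp only [P, Finset.mem_biUnion, Finset.mem_image, id]
    constructor
    · rintro ⟨_, ⟨b, -, rfl⟩, hw⟩
      exact (Finset.mem_filter.1 hw).1
    · intro hw
      obtain ⟨b, hb, hbw⟩ := hex w ((hV w).1 hw)
      exact ⟨_, ⟨b, (hV b).2 hb, rfl⟩, Finset.mem_filter.2 ⟨hw, hbw⟩⟩
  have hdisj : (P : Set (Finset (List Q))).PairwiseDisjoint id := by
    intro A hA B hB hAB
    simp only [P, Finset.coe_image, Set.mem_image, Finset.mem_coe] at hA hB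
    obtain ⟨a, ha, rfl⟩ := hA
    obtain ⟨b, hb, rfl⟩ := hB
    rw [hV] at ha hb
    rw [Function.onFun, id, id, Finset.disjoint_left]
    intro w hw hw'
    rw [Finset.mem_filter, hV] at hw hw'
    have hab := hmeet w a b hw.1 ha hb hw.2 hw'.2
    apply hAB
    ext u
    simp only [Finset.mem_filter]
    exact and_congr_right fun _ =>
      ⟨hread u a b ha hab, hread u b a hb (hsymm a b ha hab)⟩
  have hparts : ∀ A ∈ P, (id A).card = 2 ^ c := by
    intro A hA
    obtain ⟨b, hb, rfl⟩ := Finset.mem_image.1 hA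
    rw [← ncard_walks h2 c b ((hV b).1 hb), ← Set.ncard_coe_finset]
    congr 1
    ext w
    simp [hV]
  have hsum := Finset.card_biUnion hdisj
  rw [hPV, Finset.sum_congr rfl hparts, Finset.sum_const, hVcard, smul_eq_mul] at hsum
  have heven : Even (3 ^ c) := by
    rw [hsum]
    exact (Nat.even_pow.2 ⟨even_two, hpos.ne'⟩).mul_left _
  exact absurd (Nat.even_pow.1 heven).1 (by decide)

/-! ### The reduction orbit -/

theorem finite_autGroup (hburnside : ∀ g ∈ autGroup δ ρ, IsOfFinOrder g)
    (hfin : (Set.range (rWord δ ρ)).Finite) : Finite ↥(autGroup δ ρ) := by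
  have hmem : ∀ g ∈ autGroup δ ρ, ∃ u, ⇑g = rWord δ ρ u := by
    intro g hg
    induction hg using Subgroup.closure_induction with
    | mem π hπ =>
      obtain ⟨q, hq⟩ := hπ
      exact ⟨[q], hq⟩
    | one => exact ⟨[], rfl⟩
    | mul g h _ _ ihg ihh =>
      obtain ⟨u, hu⟩ := ihg
      obtain ⟨v, hv⟩ := ihh
      refine ⟨v ++ u, ?_⟩
      funext s
      rw [rWord_append, ← hu, ← hv]
      rfl
    | inv g hg ih =>
      -- by torsion, inverses are positive powers
      obtain ⟨u, hu⟩ := ih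
      have hinv : g⁻¹ = g ^ (orderOf g - 1) := by
        rw [inv_eq_iff_mul_eq_one, ← pow_succ',
          Nat.sub_add_cancel (hburnside g hg).orderOf_pos, pow_orderOf_eq_one]
      rw [hinv]
      refine ⟨wpow u (orderOf g - 1), ?_⟩
      generalize orderOf g - 1 = k
      induction k with
      | zero => rfl
      | succ k ihk =>
        funext s
        rw [pow_succ, Equiv.Perm.mul_apply, ihk, hu, wpow_succ, rWord_append]
  have : Finite (Set.range (rWord δ ρ)) := hfin.to_subtype
  refine Finite.of_injective
    (fun g : ↥(autGroup δ ρ) => (⟨⇑g.1, (hmem g.1 g.2).imp fun _ h => h.symm⟩ :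
      Set.range (rWord δ ρ))) ?_
  intro g h hgh
  exact Subtype.ext (DFunLike.coe_injective (congrArg Subtype.val hgh))

theorem exists_third (hcard : Nat.card Q = 3) {x y : Q} (hxy : x ≠ y) :
    ∃ z, z ≠ x ∧ z ≠ y ∧ ∀ p, p = x ∨ p = y ∨ p = z := by
  classical
  have : Finite Q := Nat.finite_of_card_ne_zero (by rw [hcard]; decide)
  have : Fintype Q := Fintype.ofFinite Q
  have h1 : (({x, y} : Finset Q)ᶜ).card = 1 := by
    rw [Finset.card_compl, Finset.card_pair hxy, ← Nat.card_eq_fintype_card, hcard]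
  obtain ⟨z, hz⟩ := Finset.card_eq_one.1 h1
  have hm : ∀ p, p ∈ ({x, y} : Finset Q)ᶜ ↔ p = z := fun p => by rw [hz, Finset.mem_singleton]
  simp only [Finset.mem_compl, Finset.mem_insert, Finset.mem_singleton, not_or] at hm
  refine ⟨z, ((hm z).2 rfl).1, ((hm z).2 rfl).2, fun p => ?_⟩
  by_contra! h
  exact h.2.2 ((hm p).1 ⟨h.1, h.2.1⟩)

theorem exists_append_singleton {u : List Q} {n : ℕ} (h : u.length = n + 1) :
    ∃ v x, u = v ++ [x] ∧ v.length = n := by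
  rcases List.eq_nil_or_concat u with rfl | ⟨v, x, rfl⟩
  · simp at h
  · exact ⟨v, x, by simp, by simpa using h⟩

/-- At the last transitive level `c`, an active letter somewhere gives one after every word of
length `c`, by transitivity; a third active letter would make level `c + 1` transitive. -/
theorem twoActive_of_active [Finite Q] (hcard : Nat.card Q = 3)
    (hrev : ∀ i : X, Function.Bijective (δ i)) {c : ℕ} (hc : LevelTransitive δ ρ c)
    (hc' : ¬ LevelTransitive δ ρ (c + 1)) {a₀ : List Q} (ha₀ : a₀.length = c) {x₀ : Q}
    (h₀ : Active δ ρ a₀ x₀) : TwoActive δ ρ c := by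
  intro a ha
  obtain ⟨s, rfl⟩ := hc a₀ a ha₀ ha
  obtain ⟨y, hyx, hxy⟩ := h₀.move hrev s
  set a := dWord δ ρ s a₀
  set x := dState δ (rWord δ ρ a₀ s) x₀
  obtain ⟨z, hzx, hzy, hall⟩ := exists_third hcard hyx.symm
  refine ⟨x, y, z, hyx.symm, hall, ⟨y, hyx, hxy⟩, ⟨x, hyx.symm, hxy.symm hrev⟩, ?_, hxy⟩
  rintro ⟨p, hpz, hzp⟩
  apply hc'
  -- all three letters are equivalent after `a`, so the next level is transitive as well
  have hxp : ∀ p, InOrbit δ ρ (a ++ [x]) (a ++ [p]) := by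
    have hxz : InOrbit δ ρ (a ++ [x]) (a ++ [z]) := by
      rcases hall p with rfl | rfl | rfl
      · exact hzp.symm hrev
      · exact hxy.trans (hzp.symm hrev)
      · exact absurd rfl hpz
    intro q
    rcases hall q with rfl | rfl | rfl
    · exact InOrbit.refl _
    · exact hxy
    · exact hxz
  have hto : ∀ u : List Q, u.length = c + 1 → InOrbit δ ρ u (a ++ [x]) := by
    intro u hu
    obtain ⟨v, q, rfl, hv⟩ := exists_append_singleton hu
    obtain ⟨t, ht⟩ := hc v a hv ha
    refine InOrbit.trans ⟨t, ?_⟩ ((hxp (dState δ (rWord δ ρ v t) q)).symm hrev)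
    rw [dWord_append, dWord_singleton, ht]
  intro u v hu hv
  exact (hto u hu).trans ((hto v hv).symm hrev)

/-- Every window has an active letter and there are finitely many windows, so reading active
letters comes back to some window. -/
theorem exists_closed_walk [Finite Q] [Nonempty Q] {c : ℕ} (h2 : TwoActive δ ρ c) :
    ∃ a p : List Q, a.length = c ∧ p ≠ [] ∧ Walk δ ρ a p ∧ walkEnd a p = a := by
  by_contra! hno
  have : Finite {a : List Q // a.length = c} := (List.finite_length_eq Q c).to_subtype
  let r : {a : List Q // a.length = c} → {a : List Q // a.length = c} → Prop :=
    fun b a => ∃ p, p ≠ [] ∧ Walk δ ρ a.1 p ∧ walkEnd a.1 p = b.1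
  have htrans : IsTrans _ r := ⟨by
    rintro d b a ⟨p, hp, hw, he⟩ ⟨q, hq, hw', he'⟩
    refine ⟨q ++ p, by simp [hp], (walk_append _ _ _).2 ⟨hw', he' ▸ hw⟩, ?_⟩
    rw [walkEnd_append, he', he]⟩
  have hirr : Std.Irrefl r := ⟨by
    rintro a ⟨p, hp, hw, he⟩
    exact hno a.1 p a.2 hp hw he⟩
  have hwf : WellFounded r := Finite.wellFounded_of_trans_of_irrefl r
  obtain ⟨q⟩ := ‹Nonempty Q›
  obtain ⟨a, -, hmin⟩ := hwf.has_min Set.univ ⟨⟨List.replicate c q, by simp⟩, trivial⟩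
  obtain ⟨x, -, -, -, -, hx, -⟩ := h2 a.1 a.2
  exact hmin ⟨(a.1 ++ [x]).tail, by simp [a.2]⟩ trivial ⟨[x], by simp, ⟨hx, trivial⟩, rfl⟩

/-- All orbital words of length `c + n` lie in one orbit. -/
def WalkTransitive (δ : X → Q → Q) (ρ : Q → X → X) (c n : ℕ) : Prop :=
  ∀ a w a' w' : List Q, a.length = c → a'.length = c → w.length = n → w'.length = n →
    Walk δ ρ a w → Walk δ ρ a' w' → InOrbit δ ρ (a ++ w) (a' ++ w')

/-- If all orbital words of each length were in one orbit, the powers of a closed walk would keep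
two choices for every letter, against `label_one_of_torsion`. -/
theorem exists_not_walkTransitive [Finite Q] [Nonempty Q]
    (hinv : ∀ q : Q, Function.Bijective (ρ q))
    (hburnside : ∀ g ∈ autGroup δ ρ, IsOfFinOrder g) {c : ℕ} (h2 : TwoActive δ ρ c) :
    ∃ n, ¬ WalkTransitive δ ρ c n := by
  by_contra! hall
  obtain ⟨a, p, ha, hp, hw, he⟩ := exists_closed_walk h2
  have hpow : ∀ n, Walk δ ρ a (wpow p n) := by
    intro n
    induction n with
    | zero => exact trivial
    | succ n ih =>
      rw [wpow_succ, walk_append, he]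
      exact ⟨hw, ih⟩
  obtain ⟨u, x, -, ⟨n, hn⟩, h1⟩ := label_one_of_torsion hinv hburnside p hp 0
  have hux : Walk δ ρ a (u ++ [x]) := hn ▸ hpow n
  have hu := ((walk_append a u [x]).1 hux).1
  obtain ⟨y, z, -, hyz, -, hy, hz, -⟩ := h2 (walkEnd a u) ((length_walkEnd a u).trans ha)
  have key : ∀ t, Active δ ρ (walkEnd a u) t → t = x := by
    intro t ht
    refine h1 t ?_
    refine InOrbit.suffix (u := a) (u' := a) rfl
      (hall (u.length + 1) a _ a _ ha ha (by simp) (by simp) hux ?_)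
    exact (walk_append a u [t]).2 ⟨hu, ht, trivial⟩
  exact hyz ((key y hy).trans (key z hz).symm)

/-- After `a w` only the two active letters can be equivalent, and if they were, transitivity
would carry over to orbital words one letter longer. -/
theorem label_one_of_not_walkTransitive [Finite Q] (hrev : ∀ i : X, Function.Bijective (δ i))
    {c n : ℕ} (h2 : TwoActive δ ρ c) (hn : WalkTransitive δ ρ c n)
    (hn' : ¬ WalkTransitive δ ρ c (n + 1)) {a w : List Q} (ha : a.length = c) (hw : w.length = n)
    {x z : Q} (hx : Walk δ ρ a (w ++ [x]))
    (hxz : InOrbit δ ρ (a ++ w ++ [x]) (a ++ w ++ [z])) : x = z := by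
  by_contra hne
  apply hn'
  have hwalk := (walk_append a w [x]).1 hx
  have hel := (length_walkEnd a w).trans ha
  have hxz' : InOrbit δ ρ (walkEnd a w ++ [x]) (walkEnd a w ++ [z]) := by
    rw [walkEnd_eq_drop]
    rw [← List.take_append_drop w.length (a ++ w), List.append_assoc, List.append_assoc] at hxz
    exact hxz.suffix rfl
  have hz : Active δ ρ (walkEnd a w) z := ⟨x, hne, hxz'.symm hrev⟩
  -- the two active letters after `a w` are `x` and `z`
  have honly : ∀ p, Active δ ρ (walkEnd a w) p → p = x ∨ p = z := by
    obtain ⟨x', y', z', -, hall, -, -, hz', -⟩ := h2 _ hel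
    have hiff := h2.active_iff hel hz'
    have h3 := (hiff x).1 hwalk.2.1
    have h4 := (hiff z).1 hz
    intro p hp
    have h5 := (hiff p).1 hp
    rcases hall x with h | h | h <;> rcases hall z with h' | h' | h' <;>
      rcases hall p with h'' | h'' | h'' <;> simp_all
  have hto : ∀ b v, b.length = c → v.length = n + 1 → Walk δ ρ b v →
      InOrbit δ ρ (b ++ v) (a ++ w ++ [x]) := by
    intro b v hb hv hbv
    obtain ⟨v, q, rfl, hvl⟩ := exists_append_singleton hv
    have hbv' := (walk_append b v [q]).1 hbv
    obtain ⟨s, hs⟩ := hn b v a w hb ha hvl hw hbv'.1 hwalk.1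
    have hmove : dWord δ ρ s (b ++ (v ++ [q])) =
        a ++ w ++ [dState δ (rWord δ ρ (b ++ v) s) q] := by
      rw [← List.append_assoc, dWord_append, dWord_singleton, hs]
    have hw' := walk_move hrev hbv s
    have hsplit := hs
    rw [dWord_append] at hsplit
    obtain ⟨e1, e2⟩ := List.append_inj hsplit (by rw [length_dWord, hb, ha])
    rw [dWord_append, dWord_singleton, e1, e2, ← rWord_append] at hw'
    rcases honly _ ((walk_append a w _).1 hw').2.1 with h | h
    · exact ⟨s, by rw [hmove, h]⟩
    · exact InOrbit.trans ⟨s, by rw [hmove, h]⟩ (hxz.symm hrev)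
  intro b v b' v' hb hb' hv hv' hbv hbv'
  exact (hto b v hb hv hbv).trans ((hto b' v' hb' hv' hbv').symm hrev)

/-- From length `c + n` on, the labels along orbital words are `1`; hence the orbits of orbital
words are bounded and finitely many maps are realized. -/
theorem finite_reach [Finite Q] [Finite X] (hinv : ∀ q : Q, Function.Bijective (ρ q))
    (hrev : ∀ i : X, Function.Bijective (δ i))
    {c n : ℕ} (h2 : TwoActive δ ρ c) (hn : WalkTransitive δ ρ c n)
    (hn' : ¬ WalkTransitive δ ρ c (n + 1)) (a : List Q) (ha : a.length = c) :
    (reach δ ρ a).Finite := by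
  set B := {u : List Q | u.length ≤ c + n}.ncard
  have hbound : ∀ v, Walk δ ρ a v → (orbit δ ρ (a ++ v)).ncard ≤ B := by
    intro v hv
    refine ncard_orbit_le hrev (c + n) _ ?_
    intro u x hpre hlen z hxz
    obtain ⟨m, hm⟩ := hpre
    -- write `u = a w₁ w₂` with `w₂` of length `n`
    obtain ⟨w, rfl⟩ : ∃ w, u = a ++ w := by
      have : a <+: u := by
        refine List.prefix_of_prefix_length_le (l₃ := a ++ v) (List.prefix_append _ _)
          ⟨[x] ++ m, by rw [← hm, List.append_assoc]⟩ (by omega)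
      exact this.imp fun _ h => h.symm
    rw [List.length_append, ha] at hlen
    set w₁ := w.take (w.length - n)
    set w₂ := w.drop (w.length - n)
    have hww : w = w₁ ++ w₂ := (List.take_append_drop _ _).symm
    have hw₂ : w₂.length = n := by simp only [w₂, List.length_drop]; omega
    have hvw : v = w₁ ++ (w₂ ++ [x] ++ m) := by
      rw [hww] at hm
      apply List.append_cancel_left (as := a)
      rw [← hm]; simp
    rw [hvw, walk_append, walk_append] at hv
    refine label_one_of_not_walkTransitive hrev h2 hn hn' ((length_walkEnd a w₁).trans ha) hw₂
      hv.2.1 ?_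
    rw [hww, ← List.append_assoc a, ← List.take_append_drop w₁.length (a ++ w₁),
      ← walkEnd_eq_drop, List.append_assoc, List.append_assoc, List.append_assoc,
      List.append_assoc] at hxz
    simpa using hxz.suffix rfl
  have hfin : (rWord δ ρ '' {v | Walk δ ρ a v}).Finite := by
    refine finite_rWord_of_bounded _ B fun v hv => le_trans ?_ (hbound v hv)
    have horb : (orbit δ ρ (a ++ v)).Finite := (List.finite_length_eq Q (a ++ v).length).subset (by
      rintro _ ⟨s, rfl⟩; exact length_dWord s _)
    refine (Set.ncard_le_ncard ?_ (horb.image (List.drop c))).trans (Set.ncard_image_le horb)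
    rintro _ ⟨σ, rfl⟩
    obtain ⟨s, rfl⟩ := (rWord_bijective (δ := δ) hinv a).2 σ
    refine ⟨_, ⟨s, rfl⟩, ?_⟩
    rw [dWord_append]
    exact List.drop_left' ((length_dWord s a).trans ha)
  refine ((List.finite_length_eq Q c).prod hfin).subset ?_
  rintro ⟨b, g⟩ ⟨v, hv, rfl, rfl⟩
  exact ⟨(length_walkEnd a v).trans ha, v, hv, rfl⟩

end Aux

/-- A connected 3-state invertible-reversible Mealy automaton cannot
generate an infinite Burnside group: if every element of `⟨A⟩` has finite order,
then `⟨A⟩` is finite. -/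
theorem connected_three_state_burnside
    {Q X : Type*} [Finite Q] [Finite X] [Nonempty X]
    (δ : X → Q → Q) (ρ : Q → X → X)
    (hcard : Nat.card Q = 3)
    (hinv : ∀ q : Q, Function.Bijective (ρ q))
    (hrev : ∀ i : X, Function.Bijective (δ i))
    (hconn : LevelTransitive δ ρ 1)
    (hburnside : ∀ g ∈ autGroup δ ρ, IsOfFinOrder g) :
    Finite ↥(autGroup δ ρ) := by
  classical
  have hQ : Nonempty Q := (Nat.card_pos_iff.1 (by rw [hcard]; decide)).1
  apply finite_autGroup hburnside
  -- `c` is the last transitive level; it exists by torsion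
  have hex : ∃ n, ¬ LevelTransitive δ ρ n := by
    by_contra! hall
    obtain ⟨q⟩ := hQ
    obtain ⟨u, x, -, -, h⟩ := label_one_of_torsion hinv hburnside [q] (by simp) 0
    have : Nontrivial Q := Finite.one_lt_card_iff_nontrivial.1 (by rw [hcard]; decide)
    obtain ⟨z, hz⟩ := exists_ne x
    exact hz (h z (hall (u.length + 1) _ _ (by simp) (by simp)))
  obtain ⟨c, hcpos, hc, hc'⟩ : ∃ c, 0 < c ∧ LevelTransitive δ ρ c ∧
      ¬ LevelTransitive δ ρ (c + 1) := by
    have h1 : Nat.find hex ≠ 1 := fun h => Nat.find_spec hex (h ▸ hconn)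
    have h0 : Nat.find hex ≠ 0 := fun h => Nat.find_spec hex (h ▸ by
      intro u v hu hv
      rw [List.length_eq_zero_iff.1 hu, List.length_eq_zero_iff.1 hv]
      exact InOrbit.refl _)
    refine ⟨Nat.find hex - 1, by omega, not_not.1 (Nat.find_min hex (by omega)), ?_⟩
    rw [Nat.sub_add_cancel (by omega)]
    exact Nat.find_spec hex
  by_cases hact : ∃ a x, a.length = c ∧ Active δ ρ a x
  · obtain ⟨a, x, ha, hx⟩ := hact
    have h2 := twoActive_of_active hcard hrev hc hc' ha hx
    obtain ⟨n, hn, hn'⟩ : ∃ n, WalkTransitive δ ρ c n ∧ ¬ WalkTransitive δ ρ c (n + 1) := by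
      have hex2 := exists_not_walkTransitive hinv hburnside h2
      have h0 : Nat.find hex2 ≠ 0 := fun h => Nat.find_spec hex2 (h ▸ by
        intro a w a' w' ha ha' hw hw' _ _
        rw [List.length_eq_zero_iff.1 hw, List.length_eq_zero_iff.1 hw', List.append_nil,
          List.append_nil]
        exact hc a a' ha ha')
      refine ⟨Nat.find hex2 - 1, not_not.1 (Nat.find_min hex2 (by omega)), ?_⟩
      rw [Nat.sub_add_cancel (by omega)]
      exact Nat.find_spec hex2
    have hfin := finite_reach hinv hrev h2 hn hn'
    refine ((hfin a ha).image Prod.snd).subset ?_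
    rintro _ ⟨w, rfl⟩
    -- every word acts as an orbital walk from `a`
    induction w using List.reverseRecOn with
    | nil => exact ⟨(a, id), ⟨[], trivial, rfl, rfl⟩, rfl⟩
    | append_singleton w y ih =>
      obtain ⟨_, ⟨v, hv, -, h1⟩, h3⟩ := ih
      obtain ⟨b, ⟨r, hr, rfl, hid⟩, hy⟩ := exists_linked_active hcard hinv hrev hc hcpos h2 hfin
        (walkEnd a v) ((length_walkEnd a v).trans ha) y
      refine ⟨(_, rWord δ ρ (v ++ (r ++ [y]))), ⟨v ++ (r ++ [y]), ?_, rfl, rfl⟩, ?_⟩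
      · rw [walk_append, walk_append]
        exact ⟨hv, hr, hy, trivial⟩
      · funext s
        simp only [rWord_append, hid, id, h1, h3]
  · rw [← Set.image_univ]
    refine finite_rWord_of_bounded _ {u : List Q | u.length ≤ c}.ncard fun w _ =>
      ncard_orbit_le hrev c w fun u x _ hlen z hxz => ?_
    by_contra hne
    refine hact ⟨u.drop (u.length - c), x, by rw [List.length_drop]; omega, z, Ne.symm hne, ?_⟩
    rw [← List.take_append_drop (u.length - c) u, List.append_assoc, List.append_assoc] at hxz
    simpa using hxz.suffix rfl

end MealyFormal
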